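/- There is a k-vector space isomorphism {h ∈ R^n : Σ_{i=1}^n h_i X_i ∈ fR} / (T + f·R^n + R·(f_1,…,f_n)) ≅ (I_n : f)/(I_n + (c)) ⊕ (I_{n−1} : X_n)/((I_{n−1} : X_n) ∩ (I_{n−1} + (f, f_n))). (The left-hand side is the first homology H_1(Ω^*_{V,0}, X) of the complex of Kähler forms on V = {f = 0} contracted with the vector field X.) -/

import Mathlib

/-- The linear map `(h₁, …, hₙ) ↦ ∑ hᵢ Xᵢ`. -/
noncomputable def sumMul {R : Type*} [CommRing R] {n : ℕ} (X : Fin n → R) :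
    (Fin n → R) →ₗ[R] R where
  toFun h := ∑ i, h i * X i
  map_add' h g := by simp [add_mul, Finset.sum_add_distrib]
  map_smul' r h := by simp [Finset.mul_sum, mul_assoc]

/-- The module of trivial syzygies. -/
def trivSyz {R : Type*} [CommRing R] {n : ℕ} (X : Fin n → R) : Submodule R (Fin n → R) :=
  Submodule.span R {v : Fin n → R | ∃ i j : Fin n, i < j ∧
              v = Pi.single i (X j) - Pi.single j (X i)}

lemma sumMul_apply' {R : Type*} [CommRing R] {n : ℕ} (X : Fin n → R) (h : Fin n → R) :
    sumMul X h = ∑ i, h i * X i := rfl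

lemma sumMul_single' {R : Type*} [CommRing R] {n : ℕ} (X : Fin n → R) (i : Fin n) (r : R) :
    sumMul X (Pi.single i r) = r * X i := by
  rw [sumMul_apply', Finset.sum_eq_single i]
  · simp
  · intro b _ hb
    simp [hb]
  · simp

lemma sumMul_trivSyz {R : Type*} [CommRing R] {n : ℕ} (X : Fin n → R) (t : Fin n → R)
    (ht : t ∈ trivSyz X) : sumMul X t = 0 := by
  have : trivSyz X ≤ LinearMap.ker (sumMul X) := by
    refine Submodule.span_le.2 ?_
    rintro v ⟨i, j, _, rfl⟩
    simp only [SetLike.mem_coe, LinearMap.mem_ker, map_sub, sumMul_single']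
    ring
  exact this ht

lemma exists_triv {R : Type*} [CommRing R] {n : ℕ} (X : Fin n → R) (p : Fin n) (r : R)
    (hr : r ∈ Ideal.span (X '' {j : Fin n | (j : ℕ) < (p : ℕ)})) :
    ∃ t ∈ trivSyz X, t p = r ∧ ∀ j, p < j → t j = 0 := by
  induction hr using Submodule.span_induction with
  | mem x hx =>
    obtain ⟨j, hj, rfl⟩ := hx
    have hjp : j < p := hj
    refine ⟨-(Pi.single j (X p) - Pi.single p (X j)),
      Submodule.neg_mem _ (Submodule.subset_span ⟨j, p, hjp, rfl⟩), ?_, ?_⟩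
    · simp [hjp.ne']
    · intro l hl
      simp [hl.ne', (hjp.trans hl).ne']
  | zero => exact ⟨0, Submodule.zero_mem _, rfl, fun _ _ => rfl⟩
  | add x y _ _ hx hy =>
    obtain ⟨t, h1, h2, h3⟩ := hx
    obtain ⟨s, g1, g2, g3⟩ := hy
    exact ⟨t + s, Submodule.add_mem _ h1 g1, by simp [h2, g2],
      fun j hj => by simp [h3 j hj, g3 j hj]⟩
  | smul a x _ hx =>
    obtain ⟨t, h1, h2, h3⟩ := hx
    exact ⟨a • t, Submodule.smul_mem _ _ h1, by simp [h2], fun j hj => by simp [h3 j hj]⟩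

lemma exists_coeff {R : Type*} [CommRing R] {n : ℕ} (X : Fin n → R) (S : Set (Fin n)) (r : R)
    (hr : r ∈ Ideal.span (X '' S)) :
    ∃ a : Fin n → R, sumMul X a = r ∧ ∀ j, j ∉ S → a j = 0 := by
  classical
  induction hr using Submodule.span_induction with
  | mem x hx =>
    obtain ⟨j, hj, rfl⟩ := hx
    refine ⟨Pi.single j 1, by simp [sumMul_single'], ?_⟩
    intro l hl
    have : l ≠ j := by
      rintro rfl
      exact hl hj
    simp [this]
  | zero => exact ⟨0, by simp, fun _ _ => rfl⟩
  | add x y _ _ hx hy =>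
    obtain ⟨t, h1, h2⟩ := hx
    obtain ⟨s, g1, g2⟩ := hy
    exact ⟨t + s, by simp [h1, g1], fun j hj => by simp [h2 j hj, g2 j hj]⟩
  | smul a x _ hx =>
    obtain ⟨t, h1, h2⟩ := hx
    exact ⟨a • t, by simp [h1], fun j hj => by simp [h2 j hj]⟩

lemma sumMul_mem {R : Type*} [CommRing R] {n : ℕ} (X : Fin n → R) (S : Set (Fin n))
    (a : Fin n → R) (ha : ∀ j, j ∉ S → a j = 0) : sumMul X a ∈ Ideal.span (X '' S) := by
  rw [sumMul_apply']
  refine Ideal.sum_mem _ fun i _ => ?_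
  by_cases hi : i ∈ S
  · exact Ideal.mul_mem_left _ _ (Ideal.subset_span ⟨i, hi, rfl⟩)
  · simp [ha i hi]

lemma koszul_exact {R : Type*} [CommRing R] {n : ℕ} (X : Fin n → R)
    (hregX : ∀ i : Fin n, (i : ℕ) < n - 1 → ∀ r : R,
      r * X i ∈ Ideal.span (X '' {j : Fin n | (j : ℕ) < (i : ℕ)}) →
      r ∈ Ideal.span (X '' {j : Fin n | (j : ℕ) < (i : ℕ)}))
    (m : ℕ) (hm : m ≤ n - 1) : ∀ (h : Fin n → R), sumMul X h = 0 →
      (∀ j : Fin n, m ≤ (j : ℕ) → h j = 0) → h ∈ trivSyz X := by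
  induction m with
  | zero =>
    intro h _ h0
    have : h = 0 := funext fun j => h0 j (Nat.zero_le _)
    rw [this]
    exact Submodule.zero_mem _
  | succ m ih =>
    intro h hs h0
    let p : Fin n := ⟨m, by omega⟩
    have hmem : h p * X p ∈ Ideal.span (X '' {j : Fin n | (j : ℕ) < (p : ℕ)}) := by
      have h1 : sumMul X (h - Pi.single p (h p)) ∈
          Ideal.span (X '' {j : Fin n | (j : ℕ) < (p : ℕ)}) := by
        apply sumMul_mem
        intro j hj
        by_cases hjp : j = p
        · subst hjp
          simp
        · have : m + 1 ≤ (j : ℕ) := by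
            have h1 : (j : ℕ) ≠ m := fun e => hjp (Fin.ext e)
            have h2 : ¬ (j : ℕ) < m := hj
            omega
          simp [hjp, h0 j this]
      rw [map_sub, hs, sumMul_single', zero_sub] at h1
      exact (Submodule.neg_mem_iff _).1 h1
    obtain ⟨t, ht, htp, ht0⟩ := exists_triv X p _ (hregX p (by simp [p]; omega) _ hmem)
    have := ih (by omega) (h - t) (by rw [map_sub, hs, sumMul_trivSyz X t ht, sub_zero]) (by
      intro j hj
      by_cases hjp : j = p
      · subst hjp
        simp [htp]
      · have h1 : (j : ℕ) ≠ m := fun e => hjp (Fin.ext e)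
        have h2 : p < j := by
          rw [Fin.lt_def]
          simp only [p]
          omega
        simp [ht0 j h2, h0 j (by omega)])
    simpa using Submodule.add_mem _ this ht

/-- Splitting lemma over the field, with the two maps given through auxiliary covers. -/
lemma split_aux (k : Type*) [Field k] {Z P A B C : Type*}
    [AddCommGroup Z] [AddCommGroup P] [AddCommGroup A] [AddCommGroup B] [AddCommGroup C]
    [Module k Z] [Module k P] [Module k A] [Module k B] [Module k C]
    (β : P →ₗ[k] B) (γ : P →ₗ[k] C) (ι : Z →ₗ[k] B) (π : Z →ₗ[k] A)
    (hβ : Function.Surjective β) (hγ : Function.Surjective γ) (hπ : Function.Surjective π)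
    (hβγ : ∀ p, β p = 0 → γ p = 0) (hιπ : ∀ z, ι z = 0 ↔ π z = 0)
    (hex : ∀ p, γ p = 0 → ∃ z, ι z = β p) (hex' : ∀ z, ∃ p, γ p = 0 ∧ ι z = β p) :
    Nonempty (B ≃ₗ[k] C × A) := by
  obtain ⟨sβ, hsβ⟩ := LinearMap.exists_rightInverse_of_surjective β (LinearMap.range_eq_top.2 hβ)
  obtain ⟨sπ, hsπ⟩ := LinearMap.exists_rightInverse_of_surjective π (LinearMap.range_eq_top.2 hπ)
  have hsβ' : ∀ b, β (sβ b) = b := fun b => LinearMap.congr_fun hsβ b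
  have hsπ' : ∀ b, π (sπ b) = b := fun b => LinearMap.congr_fun hsπ b
  have hg : ∀ p, γ (sβ (β p)) = γ p := fun p => by
    rw [← sub_eq_zero, ← map_sub]
    apply hβγ
    rw [map_sub, hsβ', sub_self]
  have hi : ∀ z, ι (sπ (π z)) = ι z := fun z => by
    rw [← sub_eq_zero, ← map_sub, hιπ, map_sub, hsπ', sub_self]
  have hinj : Function.Injective (ι ∘ₗ sπ) := by
    rw [injective_iff_map_eq_zero]
    intro a ha
    have := (hιπ _).1 ha
    rwa [hsπ'] at this
  have hsurj : Function.Surjective (γ ∘ₗ sβ) := by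
    intro c
    obtain ⟨p, rfl⟩ := hγ c
    exact ⟨β p, hg p⟩
  have hexact : Function.Exact (ι ∘ₗ sπ) (γ ∘ₗ sβ) := by
    intro b
    constructor
    · intro hb
      obtain ⟨z, hz⟩ := hex _ hb
      exact ⟨π z, by simp [hi, hz, hsβ']⟩
    · rintro ⟨a, rfl⟩
      obtain ⟨p, hp, hz⟩ := hex' (sπ a)
      simp [hz, hg, hp]
  obtain ⟨s, hs⟩ := LinearMap.exists_rightInverse_of_surjective _ (LinearMap.range_eq_top.2 hsurj)
  exact ⟨(hexact.splitSurjectiveEquiv hinj ⟨s, hs⟩).1.trans (LinearEquiv.prodComm k _ _)⟩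

lemma quot_aux (k : Type*) [Field k] {R : Type*} [CommRing R] [Algebra k R]
    (n : ℕ) (X : Fin n → R) (f : R) (N : Fin n) (M D : Submodule R (Fin n → R))
    (J1 Q1 J2 Q2 : Ideal R)
    (hM : ∀ h, h ∈ M ↔ ∃ g, sumMul X h = g * f)
    (hJ1 : ∀ g, g ∈ J1 ↔ ∃ h, sumMul X h = g * f)
    (hDQ : ∀ h g, sumMul X h = g * f → h ∈ D → g ∈ Q1)
    (hQD : ∀ h g, sumMul X h = g * f → g ∈ Q1 → ∃ z, sumMul X z = 0 ∧ z - h ∈ D)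
    (hJ2 : ∀ r, r ∈ J2 ↔ ∃ z, sumMul X z = 0 ∧ z N = r)
    (hQ2 : ∀ z, sumMul X z = 0 → (z ∈ D ↔ z N ∈ Q2)) :
    Nonempty ((↥M ⧸ Submodule.comap M.subtype D) ≃ₗ[k]
      ((↥J1 ⧸ Submodule.comap (Submodule.subtype J1) Q1) ×
       (↥J2 ⧸ Submodule.comap (Submodule.subtype J2) Q2))) := by
  let P : Submodule R ((Fin n → R) × R) :=
    LinearMap.ker (sumMul X ∘ₗ LinearMap.fst R _ _ -
      (LinearMap.mulRight R f) ∘ₗ LinearMap.snd R _ _)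
  have hP : ∀ p : (Fin n → R) × R, p ∈ P ↔ sumMul X p.1 = p.2 * f := by
    intro p
    simp [P, sub_eq_zero]
  let Z : Submodule R (Fin n → R) := LinearMap.ker (sumMul X)
  let β : P →ₗ[R] (↥M ⧸ Submodule.comap M.subtype D) :=
    Submodule.mkQ _ ∘ₗ LinearMap.codRestrict M (LinearMap.fst R _ _ ∘ₗ P.subtype)
      (fun p => (hM _).2 ⟨_, (hP _).1 p.2⟩)
  let γ : P →ₗ[R] (↥J1 ⧸ Submodule.comap (Submodule.subtype J1) Q1) :=
    Submodule.mkQ _ ∘ₗ LinearMap.codRestrict J1 (LinearMap.snd R _ _ ∘ₗ P.subtype)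
      (fun p => (hJ1 _).2 ⟨_, (hP _).1 p.2⟩)
  let ι : Z →ₗ[R] (↥M ⧸ Submodule.comap M.subtype D) :=
    Submodule.mkQ _ ∘ₗ LinearMap.codRestrict M Z.subtype
      (fun p => (hM _).2 ⟨0, by rw [zero_mul]; exact p.2⟩)
  let π : Z →ₗ[R] (↥J2 ⧸ Submodule.comap (Submodule.subtype J2) Q2) :=
    Submodule.mkQ _ ∘ₗ LinearMap.codRestrict J2 (LinearMap.proj N ∘ₗ Z.subtype)
      (fun p => (hJ2 _).2 ⟨p.1, p.2, rfl⟩)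
  have hβ0 : ∀ p, β p = 0 ↔ p.1.1 ∈ D := fun p => by simp [β]
  have hγ0 : ∀ p, γ p = 0 ↔ p.1.2 ∈ Q1 := fun p => by simp [γ]
  have hι0 : ∀ p, ι p = 0 ↔ p.1 ∈ D := fun p => by simp [ι]
  have hπ0 : ∀ p, π p = 0 ↔ p.1 N ∈ Q2 := fun p => by simp [π]
  have hιβ : ∀ z p, ι z = β p ↔ z.1 - p.1.1 ∈ D := fun z p => by
    simp [ι, β, Submodule.Quotient.eq]
  refine split_aux k (β.restrictScalars k) (γ.restrictScalars k) (ι.restrictScalars k)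
    (π.restrictScalars k) ?_ ?_ ?_ ?_ ?_ ?_ ?_
  · intro b
    obtain ⟨⟨h, hh⟩, rfl⟩ := Submodule.mkQ_surjective _ b
    obtain ⟨g, hg⟩ := (hM h).1 hh
    exact ⟨⟨(h, g), (hP _).2 hg⟩, rfl⟩
  · intro b
    obtain ⟨⟨g, hh⟩, rfl⟩ := Submodule.mkQ_surjective _ b
    obtain ⟨h, hg⟩ := (hJ1 g).1 hh
    exact ⟨⟨(h, g), (hP _).2 hg⟩, rfl⟩
  · intro b
    obtain ⟨⟨g, hh⟩, rfl⟩ := Submodule.mkQ_surjective _ b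
    obtain ⟨z, hz, rfl⟩ := (hJ2 g).1 hh
    exact ⟨⟨z, hz⟩, rfl⟩
  · intro p hp
    exact (hγ0 p).2 (hDQ _ _ ((hP _).1 p.2) ((hβ0 p).1 hp))
  · intro z
    exact (hι0 z).trans ((hQ2 z.1 z.2).trans (hπ0 z).symm)
  · intro p hp
    obtain ⟨z, hz, hzD⟩ := hQD _ _ ((hP _).1 p.2) ((hγ0 p).1 hp)
    exact ⟨⟨z, hz⟩, (hιβ _ _).2 hzD⟩
  · intro z
    have hz : sumMul X z.1 = 0 := z.2
    refine ⟨⟨(z.1, 0), (hP _).2 (by simp [hz])⟩, (hγ0 _).2 (Submodule.zero_mem _),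
      (hιβ _ _).2 ?_⟩
    simp

/-- `H_1(Ω^*_{V,0}, X)`, i.e.
`{h ∈ Rⁿ : ∑ hᵢXᵢ ∈ fR}/(T + f·Rⁿ + R·(f_1,…,f_n))`, is isomorphic as a `k`-vector
space to `(Iₙ : f)/(Iₙ + (c)) ⊕ (I_{n−1} : Xₙ)/((I_{n−1} : Xₙ) ∩ (I_{n−1} + (f, fₙ)))`. -/
theorem h1_omega_V_iso
    (k : Type*) [Field k] {R : Type*} [CommRing R] [Algebra k R]
    (n : ℕ) (hn : 2 ≤ n) (X : Fin n → R) (f : R) (fd : Fin n → R) (c : R)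
    (hregX : ∀ i : Fin n, (i : ℕ) < n - 1 → ∀ r : R,
      r * X i ∈ Ideal.span (X '' {j : Fin n | (j : ℕ) < (i : ℕ)}) →
      r ∈ Ideal.span (X '' {j : Fin n | (j : ℕ) < (i : ℕ)}))
    (hregf : ∀ r : R, r * f ∈ Ideal.span (X '' {j : Fin n | (j : ℕ) < n - 1}) →
      r ∈ Ideal.span (X '' {j : Fin n | (j : ℕ) < n - 1}))
    (htan : ∑ i, X i * fd i = c * f) :
    Nonempty (
      (↥(Submodule.comap (sumMul X) (Ideal.span {f})) ⧸
        Submodule.comap (Submodule.comap (sumMul X) (Ideal.span {f})).subtype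
          (Submodule.span R {v : Fin n → R | ∃ i j : Fin n, i < j ∧
              v = Pi.single i (X j) - Pi.single j (X i)} ⊔
            Submodule.map (LinearMap.lsmul R (Fin n → R) f) ⊤ ⊔
            Submodule.span R {fd}))
      ≃ₗ[k]
      ((↥((Ideal.span (Set.range X)).colon (Ideal.span {f})) ⧸
          Submodule.comap ((Ideal.span (Set.range X)).colon (Ideal.span {f})).subtype
            (Ideal.span (Set.range X) ⊔ Ideal.span {c})) ×
        (↥((Ideal.span (X '' {j : Fin n | (j : ℕ) < n - 1})).colon
            (Ideal.span {X ⟨n - 1, Nat.sub_lt (Nat.lt_of_lt_of_le Nat.zero_lt_two hn)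
              Nat.one_pos⟩})) ⧸
          Submodule.comap
            ((Ideal.span (X '' {j : Fin n | (j : ℕ) < n - 1})).colon
              (Ideal.span {X ⟨n - 1, Nat.sub_lt (Nat.lt_of_lt_of_le Nat.zero_lt_two hn)
                Nat.one_pos⟩})).subtype
            ((Ideal.span (X '' {j : Fin n | (j : ℕ) < n - 1})).colon
                (Ideal.span {X ⟨n - 1, Nat.sub_lt (Nat.lt_of_lt_of_le Nat.zero_lt_two hn)
                  Nat.one_pos⟩}) ⊓
              (Ideal.span (X '' {j : Fin n | (j : ℕ) < n - 1}) ⊔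
                Ideal.span ({f, fd ⟨n - 1, Nat.sub_lt (Nat.lt_of_lt_of_le Nat.zero_lt_two hn)
                  Nat.one_pos⟩} : Set R)))))) := by
  have hN : n - 1 < n := Nat.sub_lt (Nat.lt_of_lt_of_le Nat.zero_lt_two hn) Nat.one_pos
  obtain ⟨N, hNdef⟩ : ∃ N : Fin n, N = ⟨n - 1, hN⟩ := ⟨_, rfl⟩
  have hNv : (N : ℕ) = n - 1 := by rw [hNdef]
  rw [← hNdef]
  have hfd : sumMul X fd = c * f := by
    rw [← htan, sumMul_apply']
    exact Finset.sum_congr rfl fun i _ => mul_comm _ _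
  set I := Ideal.span (X '' {j : Fin n | (j : ℕ) < n - 1}) with hI
  have hIn : ∀ r, r ∈ Ideal.span (Set.range X) ↔ ∃ a, sumMul X a = r := by
    intro r
    rw [← Set.image_univ]
    constructor
    · intro h
      obtain ⟨a, ha, _⟩ := exists_coeff X _ r h
      exact ⟨a, ha⟩
    · rintro ⟨a, rfl⟩
      exact sumMul_mem X _ a (by simp)
  have hIle : I ≤ Ideal.span (Set.range X) := Ideal.span_mono (Set.image_subset_range _ _)
  have hcoef : ∀ r ∈ I, ∃ a, sumMul X a = r ∧ a N = 0 := by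
    intro r hr
    obtain ⟨a, h1, h2⟩ := exists_coeff X _ r hr
    exact ⟨a, h1, h2 N (by simp [hNv])⟩
  have hlast : ∀ a, sumMul X a - a N * X N ∈ I := by
    intro a
    rw [← sumMul_single', ← map_sub]
    refine sumMul_mem X _ _ fun j hj => ?_
    have : j = N := by
      apply Fin.ext
      have h1 : ¬ (j : ℕ) < n - 1 := hj
      have := j.2
      omega
    subst this
    simp
  have hDmem : ∀ h, h ∈ (Submodule.span R {v : Fin n → R | ∃ i j : Fin n, i < j ∧
              v = Pi.single i (X j) - Pi.single j (X i)} ⊔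
            Submodule.map (LinearMap.lsmul R (Fin n → R) f) ⊤ ⊔
            Submodule.span R {fd}) ↔ ∃ t ∈ trivSyz X, ∃ a : Fin n → R, ∃ b : R,
              h = t + f • a + b • fd := by
    intro h
    change h ∈ trivSyz X ⊔ _ ⊔ _ ↔ _
    constructor
    · intro hh
      obtain ⟨y, hy, w, hw, rfl⟩ := Submodule.mem_sup.1 hh
      obtain ⟨t, ht, u, ⟨a, _, rfl⟩, rfl⟩ := Submodule.mem_sup.1 hy
      obtain ⟨b, rfl⟩ := Submodule.mem_span_singleton.1 hw
      exact ⟨t, ht, a, b, rfl⟩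
    · rintro ⟨t, ht, a, b, rfl⟩
      exact Submodule.add_mem_sup (Submodule.add_mem_sup ht ⟨a, trivial, rfl⟩)
        (Submodule.mem_span_singleton.2 ⟨b, rfl⟩)
  have htrivN : ∀ t ∈ trivSyz X, t N ∈ I := by
    have : trivSyz X ≤ Submodule.comap (LinearMap.proj N) I := by
      refine Submodule.span_le.2 ?_
      rintro v ⟨i, j, hij, rfl⟩
      have hi : i ≠ N := by
        rintro rfl
        have h1 : (i : ℕ) < j := hij
        have := j.2
        omega
      have hi' : (i : ℕ) < n - 1 := by
        have h1 : (i : ℕ) < j := hij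
        have := j.2
        omega
      by_cases hj : j = N
      · subst hj
        have hx : X i ∈ I := Ideal.subset_span ⟨i, hi', rfl⟩
        simpa [hi.symm] using hx
      · simp [hi.symm, Ne.symm hj]
    exact fun t ht => this ht
  have hcol : ∀ (K : Ideal R) (x r : R), r ∈ K.colon (Ideal.span {x} : Ideal R) ↔ r * x ∈ K := by
    intro K x r
    rw [Submodule.mem_colon]
    constructor
    · intro h
      exact h x (Ideal.mem_span_singleton_self x)
    · intro h y hy
      obtain ⟨b, rfl⟩ := Ideal.mem_span_singleton'.1 hy
      have : r • (b * x) = b * (r * x) := by simp only [smul_eq_mul]; ring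
      rw [this]
      exact Ideal.mul_mem_left _ _ h
  have hJ2 : ∀ r, r * X N ∈ I ↔ ∃ z, sumMul X z = 0 ∧ z N = r := by
    intro r
    constructor
    · intro hr
      obtain ⟨a, ha, ha0⟩ := hcoef _ hr
      exact ⟨Pi.single N r - a, by rw [map_sub, sumMul_single', ha, sub_self], by simp [ha0]⟩
    · rintro ⟨z, hz, rfl⟩
      have := hlast z
      rw [hz, zero_sub] at this
      exact (Submodule.neg_mem_iff _).1 this
  refine quot_aux k n X f N _ _ _ _ _ _ ?_ ?_ ?_ ?_ ?_ ?_
  · intro h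
    rw [Submodule.mem_comap, Ideal.mem_span_singleton']
    exact ⟨fun ⟨a, h⟩ => ⟨a, h.symm⟩, fun ⟨a, h⟩ => ⟨a, h.symm⟩⟩
  · intro g
    rw [hcol, hIn]
  · intro h g hg hD
    obtain ⟨t, ht, a, b, rfl⟩ := (hDmem _).1 hD
    rw [map_add, map_add, map_smul, map_smul, hfd, sumMul_trivSyz X t ht, smul_eq_mul,
      smul_eq_mul] at hg
    have h1 : (g - sumMul X a - b * c) * f ∈ I := by
      have : (g - sumMul X a - b * c) * f = 0 := by linear_combination -hg
      rw [this]
      exact I.zero_mem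
    have h2 := hIle (hregf _ h1)
    have h3 : g = ((g - sumMul X a - b * c) + sumMul X a) + b * c := by ring
    rw [h3]
    exact Submodule.add_mem_sup (Ideal.add_mem _ h2 ((hIn _).2 ⟨a, rfl⟩))
      (Ideal.mem_span_singleton'.2 ⟨b, rfl⟩)
  · intro h g hg hQ
    obtain ⟨y, hy, w, hw, rfl⟩ := Submodule.mem_sup.1 hQ
    obtain ⟨a, rfl⟩ := (hIn _).1 hy
    obtain ⟨b, rfl⟩ := Ideal.mem_span_singleton'.1 hw
    refine ⟨h - f • a - b • fd, ?_, ?_⟩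
    · rw [map_sub, map_sub, map_smul, map_smul, hfd, hg, smul_eq_mul, smul_eq_mul]
      ring
    · refine (hDmem _).2 ⟨0, Submodule.zero_mem _, -a, -b, ?_⟩
      simp only [smul_neg, neg_smul]
      abel
  · intro r
    rw [hcol, hJ2]
  · intro z hz
    rw [Submodule.mem_inf, hcol]
    constructor
    · intro hD
      refine ⟨(hJ2 _).2 ⟨z, hz, rfl⟩, ?_⟩
      obtain ⟨t, ht, a, b, rfl⟩ := (hDmem _).1 hD
      have : (t + f • a + b • fd) N = t N + (a N * f + b * fd N) := by
        simp only [Pi.add_apply, Pi.smul_apply, smul_eq_mul]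
        ring
      rw [this]
      exact Submodule.add_mem_sup (htrivN t ht) (Ideal.mem_span_pair.2 ⟨_, _, rfl⟩)
    · rintro ⟨h1, h2⟩
      obtain ⟨t, ht, w, hw, hzN⟩ := Submodule.mem_sup.1 h2
      obtain ⟨a, b, rfl⟩ := Ideal.mem_span_pair.1 hw
      have h3 : (a * X N + b * c) * f ∈ I := by
        have h4 := I.mul_mem_left b (hlast fd)
        rw [hfd] at h4
        have h5 := I.add_mem (I.sub_mem h1 (I.mul_mem_right (X N) ht)) h4
        have : (a * X N + b * c) * f =
            z N * X N - t * X N + b * (c * f - fd N * X N) := by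
          rw [← hzN]
          ring
        rwa [this]
      obtain ⟨a', ha', ha0⟩ := hcoef _ (hregf _ h3)
      obtain ⟨s, hs, hsN, _⟩ := exists_triv X N t (by rw [hNv]; exact ht)
      have key : z - s - f • (Pi.single N a - a') - b • fd ∈ trivSyz X := by
        apply koszul_exact X hregX (n - 1) le_rfl
        · simp only [map_sub, map_smul, hfd, hz, sumMul_trivSyz X s hs, sumMul_single', ha',
            smul_eq_mul]
          ring
        · intro j hj
          have : j = N := by
            apply Fin.ext
            have := j.2
            omega
          subst this
          simp only [Pi.sub_apply, Pi.smul_apply, smul_eq_mul, Pi.single_eq_same, ha0, hsN, ← hzN]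
          ring
      refine (hDmem _).2 ⟨_, Submodule.add_mem _ key hs, Pi.single N a - a', b, ?_⟩
      abel
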